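/- arXiv:2601.03208 — 2 statements merged into one kernel-verified Lean document; each statement's English description precedes it below -/
import Mathlib

section
/- Let I be a monomial ideal of R = K[x_1,…,x_n] of height at least 2. Then R/I is Cohen–Macaulay if and only if R/sgn(I) is Cohen–Macaulay. -/
open MvPolynomial

/-- The monomial ideal of `R = K[x_1,…,x_n]` generated by the monomials `x^{v j}`,
`j = 1, …, q`, with exponent vectors `v j ∈ ℕ^n`. -/
noncomputable def monIdeal (K : Type) [Field K] {n q : ℕ} (v : Fin q → Fin n →₀ ℕ) :
    Ideal (MvPolynomial (Fin n) K) :=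
  Ideal.span (Set.range fun j => monomial (v j) (1 : K))

/-- The exponent vectors `v j` are pairwise non-comparable in the componentwise order,
i.e. the corresponding monomials form an anti-chain under divisibility.  Equivalently,
`{x^{v j}}` is the (unique) minimal monomial generating set `G(I)` of the monomial ideal
`I` it generates. -/
def AntichainFam {n q : ℕ} (v : Fin q → Fin n →₀ ℕ) : Prop :=
  ∀ j k : Fin q, v j ≤ v k → j = k

/-- The signature of the family `v` of exponent vectors (the columns of the incidence
matrix `A`): for each row `i`, the `(i,j)` entry of the signature matrix is the position
of `A i j = v j i` in the ascending list of the distinct entries of the `i`-th row of `A`,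
i.e. the number of distinct values in row `i` that are strictly smaller than `v j i`.
The columns of the resulting matrix are the exponent vectors of the generators of the
signature ideal `sgn(I) = monIdeal K (sgnExp v)`. -/
noncomputable def sgnExp {n q : ℕ} (v : Fin q → Fin n →₀ ℕ) : Fin q → Fin n →₀ ℕ :=
  fun j => Finsupp.equivFunOnFinite.symm fun i =>
    ((Finset.univ.image fun k : Fin q => v k i).filter fun m => m < v j i).card

/-- The graded maximal ideal `(x_1, …, x_n)` of `K[x_1,…,x_n]`. -/
noncomputable def mIdeal (K : Type) [Field K] (n : ℕ) : Ideal (MvPolynomial (Fin n) K) :=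
  Ideal.span (Set.range (X : Fin n → MvPolynomial (Fin n) K))

/-- The depth of `R/I` with respect to the maximal ideal `(x_1, …, x_n)`: the largest
length of an `R/I`-regular sequence consisting of elements of `(x_1, …, x_n)`. -/
noncomputable def depthQuot (K : Type) [Field K] (n : ℕ)
    (I : Ideal (MvPolynomial (Fin n) K)) : ℕ :=
  sSup { k : ℕ | ∃ rs : List (MvPolynomial (Fin n) K), rs.length = k ∧
    (∀ r ∈ rs, r ∈ mIdeal K n) ∧
    RingTheory.Sequence.IsRegular (MvPolynomial (Fin n) K ⧸ I) rs }

/-- The height (codimension) of an ideal: the infimum of the heights of the prime ideals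
containing it, where the height of a prime is the supremum of the lengths of chains of
primes descending from it. -/
noncomputable def heightOf {R : Type*} [CommRing R] (I : Ideal R) : ℕ∞ :=
  ⨅ p ∈ { p : PrimeSpectrum R | I ≤ p.asIdeal }, Order.height p

/-- `R/I` is Cohen–Macaulay: its depth equals its Krull dimension. -/
noncomputable def cmQuot (K : Type) [Field K] (n : ℕ)
    (I : Ideal (MvPolynomial (Fin n) K)) : Prop :=
  ((depthQuot K n I : ℕ∞) : WithBot ℕ∞) = ringKrullDim (MvPolynomial (Fin n) K ⧸ I)

/-!
Fix a variable `x = x_i` and `t ≥ 1`. Let `L` be generated by the generators of `I` whose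
exponent of `x` is less than `t`, and `x H` by the others. Adding `c` to all exponents of `x` that
are at least `t` turns `I = L + x H` into `L + x ^ (c + 1) H`. Since `x` is regular on
`P = (L + H) / L`, multiplication by `x ^ (c + 1)` gives an exact sequence
`0 → P → R / L → R / (L + x ^ (c + 1) H) → 0`. On `Ext^d(R / 𝔪, -)` its first map is multiplication
by an element of `𝔪`, hence zero, so `Ext^d(R / 𝔪, -)` vanishes on the third term if and only if it
vanishes on the second and `Ext^(d + 1)(R / 𝔪, P) = 0`, a condition independent of `c`. By the Rees
theorem the depth does not change. If every row has a zero entry, closing the gaps between the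
entries of the rows in this way leads from `I` to `sgn(I)`.

Height at least two forces a zero in every row, as otherwise `I ⊆ (x_i)`. Hence `I` and `sgn(I)`
have the same zero pattern of exponents, so the same radical and the same dimension.
-/

section ExtVanishing

open CategoryTheory Abelian
open scoped Pointwise

universe u v w

theorem subsingleton_ext_iff_of_comp_eq_zero {C : Type u} [Category.{v} C] [Abelian C]
    [HasExt.{w} C] {S : ShortComplex C} (hS : S.ShortExact) (T : C)
    (hzero : ∀ i (x : Ext T S.X₁ i), x.comp (Ext.mk₀ S.f) (add_zero i) = 0) (i : ℕ) :
    Subsingleton (Ext T S.X₃ i) ↔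
      Subsingleton (Ext T S.X₂ i) ∧ Subsingleton (Ext T S.X₁ (i + 1)) := by
  have hext (Y : C) (k : ℕ) : Subsingleton (Ext T Y k) ↔ ∀ x : Ext T Y k, x = 0 :=
    subsingleton_iff_forall_eq 0
  simp only [hext]
  refine ⟨fun h₃ => ⟨fun x₂ => ?_, fun x₁ => ?_⟩, fun ⟨h₂, h₁⟩ x₃ => ?_⟩
  · obtain ⟨x₁, rfl⟩ := Ext.covariant_sequence_exact₂ T hS x₂ (h₃ _)
    exact hzero i x₁
  · obtain ⟨x₃, rfl⟩ := Ext.covariant_sequence_exact₁ T hS x₁ (hzero _ x₁) rfl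
    rw [h₃ x₃, Ext.zero_comp]
  · obtain ⟨x₂, rfl⟩ := Ext.covariant_sequence_exact₃ T hS x₃ rfl (h₁ _)
    rw [h₂ x₂, Ext.zero_comp]

variable {R : Type u} [CommRing R]

theorem smul_ext_eq_zero_of_mem_annihilator [Small.{v} R] {T N : ModuleCat.{v} R} {r : R}
    (hr : r ∈ Module.annihilator R T) {i : ℕ} (x : Ext T N i) : r • x = 0 := by
  have hid : r • 𝟙 T = 0 := by
    rw [← ModuleCat.lsmul_eq_smul_id, Module.mem_annihilator_iff_lsmul_eq_zero.mp hr,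
      ModuleCat.ofHom_zero]
  calc r • x = (Ext.mk₀ (r • 𝟙 T)).comp x (zero_add i) := by simp [Ext.mk₀_smul]
    _ = 0 := by rw [hid, Ext.mk₀_zero, Ext.zero_comp]

theorem subsingleton_ext_iff_of_exact_smul [Small.{v} R] {T : ModuleCat.{v} R} {r : R}
    (hr : r ∈ Module.annihilator R T) {P N Q : Type v} [AddCommGroup P] [Module R P]
    [AddCommGroup N] [Module R N] [AddCommGroup Q] [Module R Q] {f : P →ₗ[R] N} {g : N →ₗ[R] Q}
    (hf : Function.Injective (r • f)) (hfg : Function.Exact (r • f) g)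
    (hg : Function.Surjective g) (i : ℕ) :
    Subsingleton (Ext T (ModuleCat.of R Q) i) ↔
      Subsingleton (Ext T (ModuleCat.of R N) i) ∧
        Subsingleton (Ext T (ModuleCat.of R P) (i + 1)) := by
  let S := ModuleCat.shortComplexOfCompEqZero (r • f) g hfg.linearMap_comp_eq_zero
  have hS : S.ShortExact := ModuleCat.shortComplex_shortExact S hfg hf hg
  refine subsingleton_ext_iff_of_comp_eq_zero hS T (fun i x => ?_) i
  have hSf : S.f = r • ModuleCat.ofHom f := rfl
  rw [hSf, Ext.mk₀_smul, Ext.comp_smul]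
  exact smul_ext_eq_zero_of_mem_annihilator hr _

theorem isSMulRegular_map_mkQ {M : Type*} [AddCommGroup M] [Module R M] {L H : Submodule R M}
    {r : R} (hr : ∀ h ∈ H, r • h ∈ L → h ∈ L) : IsSMulRegular (H.map L.mkQ) r := by
  refine (isSMulRegular_submodule_iff_right_eq_zero_of_smul _ _).2 ?_
  rintro _ ⟨h, hh, rfl⟩ hrh
  exact (Submodule.Quotient.mk_eq_zero L).2 (hr h hh ((Submodule.Quotient.mk_eq_zero L).1 hrh))

theorem exact_smul_subtype_factor {M : Type*} [AddCommGroup M] [Module R M] (L H : Submodule R M)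
    (r : R) : Function.Exact (r • (H.map L.mkQ).subtype)
      (Submodule.factor (le_sup_left : L ≤ L ⊔ r • H)) := by
  rw [LinearMap.exact_iff, Submodule.ker_mapQ, Submodule.comap_id, Submodule.map_sup,
    Submodule.map_pointwise_smul]
  ext y
  simp [Submodule.mem_smul_pointwise_iff_exists]

theorem subsingleton_ext_quotient_sup_smul_iff [Small.{v} R] {T : ModuleCat.{v} R} {M : Type v}
    [AddCommGroup M] [Module R M] {L H : Submodule R M} {r : R}
    (hrT : r ∈ Module.annihilator R T) (hr : ∀ h ∈ H, r • h ∈ L → h ∈ L)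
    {a b : ℕ} (ha : 1 ≤ a) (hb : 1 ≤ b) (i : ℕ) :
    Subsingleton (Ext T (ModuleCat.of R (M ⧸ L ⊔ r ^ a • H)) i) ↔
      Subsingleton (Ext T (ModuleCat.of R (M ⧸ L ⊔ r ^ b • H)) i) := by
  have hpow {c : ℕ} (hc : 1 ≤ c) := subsingleton_ext_iff_of_exact_smul (T := T)
    (Ideal.pow_mem_of_mem _ hrT c hc)
    (Subtype.val_injective.comp ((isSMulRegular_map_mkQ hr).pow c))
    (exact_smul_subtype_factor L H (r ^ c)) (Submodule.factor_surjective _) i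
  rw [hpow ha, hpow hb]

theorem smul_top_quotient_lt_top {I J : Ideal R} (hI : I ≠ ⊤) (hJI : J ≤ I) :
    I • (⊤ : Submodule R (R ⧸ J)) < ⊤ := by
  refine lt_top_iff_ne_top.2 fun htop => hI ?_
  have hcomap := Submodule.comap_smul_top_of_surjective I J.mkQ J.mkQ_surjective
  rwa [htop, Submodule.comap_top, Submodule.ker_mkQ, smul_eq_mul, Ideal.mul_top,
    sup_of_le_left hJI, eq_comm] at hcomap

theorem exists_isRegular_quotient_iff_subsingleton_ext [IsNoetherianRing R] {I J : Ideal R}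
    (hI : I ≠ ⊤) (hJI : J ≤ I) (k : ℕ) :
    (∃ rs : List R, rs.length = k ∧ (∀ r ∈ rs, r ∈ I) ∧
      RingTheory.Sequence.IsRegular (R ⧸ J) rs) ↔
      ∀ i < k, Subsingleton (Ext (ModuleCat.of R (R ⧸ I)) (ModuleCat.of R (R ⧸ J)) i) := by
  have hsupp : Module.support R (R ⧸ I) = PrimeSpectrum.zeroLocus I := by
    rw [Module.support_eq_zeroLocus, Ideal.annihilator_quotient]
  have hlt := smul_top_quotient_lt_top hI hJI
  refine ⟨?_, ModuleCat.exists_isRegular_of_exists_subsingleton_ext I k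
    (ModuleCat.of R (R ⧸ J)) hlt (ModuleCat.of R (R ⧸ I)) hsupp⟩
  rintro ⟨rs, rfl, hmem, hreg⟩
  exact ModuleCat.subsingleton_ext_of_exists_isRegular I (ModuleCat.of R (R ⧸ I)) hsupp.subset
    (ModuleCat.of R (R ⧸ J)) hlt rs hmem hreg

end ExtVanishing

theorem ringKrullDim_quotient_eq_of_radical_eq {R : Type*} [CommRing R] {I J : Ideal R}
    (h : I.radical = J.radical) : ringKrullDim (R ⧸ I) = ringKrullDim (R ⧸ J) := by
  rw [ringKrullDim_quotient, ringKrullDim_quotient, ← PrimeSpectrum.zeroLocus_radical I, h,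
    PrimeSpectrum.zeroLocus_radical]

theorem mem_span_monomial_of_X_smul_mem {σ A : Type*} [CommSemiring A] {S T : Set (σ →₀ ℕ)}
    {i : σ} (hST : ∀ a ∈ S, ∀ b ∈ T, a i ≤ b i) {f : MvPolynomial σ A}
    (hf : f ∈ Ideal.span ((fun a => monomial a (1 : A)) '' T))
    (hXf : (X i : MvPolynomial σ A) • f ∈ Ideal.span ((fun a => monomial a (1 : A)) '' S)) :
    f ∈ Ideal.span ((fun a => monomial a (1 : A)) '' S) := by
  rw [mem_ideal_span_monomial_image] at hf hXf ⊢
  intro d hd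
  obtain ⟨b, hb, hbd⟩ := hf d hd
  obtain ⟨a, ha, had⟩ := hXf (Finsupp.single i 1 + d) (by
    rwa [mem_support_iff, smul_eq_mul, coeff_X_mul, ← mem_support_iff])
  refine ⟨a, ha, fun i' => ?_⟩
  by_cases hi : i = i'
  · subst hi
    exact (hST a ha b hb).trans (hbd i)
  · simpa [hi] using had i'

section Signature

variable {n q : ℕ}

theorem sgnExp_apply (v : Fin q → Fin n →₀ ℕ) (j : Fin q) (i : Fin n) :
    sgnExp v j i = ((Finset.univ.image fun k => v k i).filter (· < v j i)).card := rfl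

theorem sgnExp_eq_zero_iff {v : Fin q → Fin n →₀ ℕ} {i : Fin n} (hi : ∃ k, v k i = 0)
    (j : Fin q) : sgnExp v j i = 0 ↔ v j i = 0 := by
  obtain ⟨k, hk⟩ := hi
  simp only [sgnExp_apply, Finset.card_eq_zero, Finset.filter_eq_empty_iff,
    Finset.forall_mem_image, Finset.mem_univ, true_imp_iff, not_lt]
  exact ⟨fun hmin => Nat.le_zero.1 (hk ▸ hmin (x := k)), fun hj _ => hj ▸ Nat.zero_le _⟩

theorem sgnExp_eq_of_strictMono {v w : Fin q → Fin n →₀ ℕ} {g : Fin n → ℕ → ℕ}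
    (hg : ∀ i, StrictMono (g i)) (hvw : ∀ j i, v j i = g i (w j i)) : sgnExp v = sgnExp w := by
  funext j
  ext i
  have himage : (Finset.univ.image fun k => v k i).filter (· < v j i) =
      ((Finset.univ.image fun k => w k i).filter (· < w j i)).image (g i) := by
    simp only [hvw, Finset.filter_image, Finset.image_image, (hg i).lt_iff_lt, Function.comp_def]
  rw [sgnExp_apply, sgnExp_apply, himage, Finset.card_image_of_injective _ (hg i).injective]

theorem sgnExp_eq_self {v : Fin q → Fin n →₀ ℕ}
    (hfull : ∀ i j, ∀ s < v j i, ∃ k, v k i = s) : sgnExp v = v := by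
  funext j
  ext i
  have hvalues : (Finset.univ.image fun k => v k i).filter (· < v j i) = Finset.range (v j i) := by
    ext s
    simpa using hfull i j s
  rw [sgnExp_apply, hvalues, Finset.card_range]

/-- The family obtained from `u` by adding `c` to all those entries of the `i`-th row of the
incidence matrix that are at least `t`. -/
noncomputable def shiftRow (i : Fin n) (t c : ℕ) (u : Fin q → Fin n →₀ ℕ) :
    Fin q → Fin n →₀ ℕ :=
  fun j => u j + Finsupp.single i (if t ≤ u j i then c else 0)

theorem shiftRow_zero (i : Fin n) (t : ℕ) (u : Fin q → Fin n →₀ ℕ) : shiftRow i t 0 u = u := by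
  funext j
  simp [shiftRow]

theorem sgnExp_shiftRow (i : Fin n) (t c : ℕ) (u : Fin q → Fin n →₀ ℕ) :
    sgnExp (shiftRow i t c u) = sgnExp u := by
  refine sgnExp_eq_of_strictMono (g := fun i' x => x + if i = i' ∧ t ≤ x then c else 0)
    (fun i' x y hxy => ?_) fun j i' => ?_
  · grind
  · by_cases hi : i = i'
    · subst hi
      simp [shiftRow]
    · simp [shiftRow, hi]

theorem exists_shiftRow_eq_of_sgnExp_ne {v : Fin q → Fin n →₀ ℕ} (hzero : ∀ i, ∃ j, v j i = 0)
    (hv : sgnExp v ≠ v) : ∃ i t u, 1 ≤ t ∧ u < v ∧ shiftRow i t 1 u = v := by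
  obtain ⟨i, j, s, hsj, hs⟩ : ∃ i j, ∃ s < v j i, ∀ k, v k i ≠ s := by
    contrapose! hv
    exact sgnExp_eq_self hv
  have hs_pos : 1 ≤ s := by
    obtain ⟨k, hk⟩ := hzero i
    exact Nat.one_le_iff_ne_zero.2 (hk ▸ hs k).symm
  let u : Fin q → Fin n →₀ ℕ := fun k => v k - Finsupp.single i (if s < v k i then 1 else 0)
  have hshift : shiftRow i s 1 u = v := by
    funext k
    ext i'
    have hsk := hs k
    by_cases hi : i = i'
    · subst hi
      simp only [shiftRow, u, Finsupp.add_apply, Finsupp.tsub_apply, Finsupp.single_eq_same]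
      grind
    · simp [shiftRow, u, hi]
  refine ⟨i, s, u, hs_pos, lt_of_le_of_ne (fun k => tsub_le_self) fun huv => ?_, hshift⟩
  have huj : u j i = v j i - 1 := by simp [u, hsj]
  rw [huv] at huj
  omega

end Signature

section MonomialIdeal

open CategoryTheory Abelian
open scoped Pointwise

variable {K : Type} [Field K] {n q : ℕ}

/- Factoring `X i` out of the shifted generators makes the exponent positive for `c = 0` as well, so
that `u` itself has the same shape as its shifts. -/
theorem monIdeal_shiftRow (i : Fin n) {t : ℕ} (ht : 1 ≤ t) (c : ℕ) (u : Fin q → Fin n →₀ ℕ) :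
    monIdeal K (shiftRow i t c u) =
      Ideal.span ((fun a => monomial a (1 : K)) '' (u '' {j | u j i < t})) ⊔
        (X i : MvPolynomial (Fin n) K) ^ (c + 1) • Ideal.span ((fun a => monomial a (1 : K)) ''
          ((fun j => u j - Finsupp.single i 1) '' {j | t ≤ u j i})) := by
  have hcover : {j | u j i < t} ∪ {j | t ≤ u j i} = Set.univ := by
    ext j
    simp [lt_or_ge]
  rw [Ideal.span, Ideal.span, Submodule.smul_span, ← Submodule.span_union, monIdeal, Ideal.span,
    ← Set.image_univ, ← hcover, Set.image_union, ← Set.image_smul, Set.image_image,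
    Set.image_image, Set.image_image]
  congr 2
  · refine Set.image_congr fun j (hj : u j i < t) => ?_
    simp [shiftRow, hj.not_ge]
  · refine Set.image_congr fun j (hj : t ≤ u j i) => ?_
    have hsub : u j - Finsupp.single i 1 + Finsupp.single i 1 = u j :=
      tsub_add_cancel_of_le (Finsupp.single_le_iff.2 (ht.trans hj))
    rw [X_pow_eq_monomial, smul_eq_mul, monomial_mul, one_mul, add_comm c, Finsupp.single_add,
      add_comm _ (u j - _), ← add_assoc, hsub, shiftRow, if_pos hj]

theorem subsingleton_ext_monIdeal_shiftRow_iff {T : ModuleCat.{0} (MvPolynomial (Fin n) K)}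
    {i : Fin n} (hT : X i ∈ Module.annihilator (MvPolynomial (Fin n) K) T) {t : ℕ} (ht : 1 ≤ t)
    (c : ℕ) (u : Fin q → Fin n →₀ ℕ) (d : ℕ) :
    Subsingleton (Ext T (ModuleCat.of _ (_ ⧸ monIdeal K (shiftRow i t c u))) d) ↔
      Subsingleton (Ext T (ModuleCat.of _ (_ ⧸ monIdeal K u)) d) := by
  conv_rhs => rw [← shiftRow_zero i t u]
  rw [monIdeal_shiftRow i ht, monIdeal_shiftRow i ht]
  refine subsingleton_ext_quotient_sup_smul_iff hT (fun f hf hXf => ?_) (Nat.le_add_left 1 c)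
    (Nat.le_add_left 1 0) d
  refine mem_span_monomial_of_X_smul_mem ?_ hf hXf
  rintro _ ⟨k, hk : u k i < t, rfl⟩ _ ⟨j, hj : t ≤ u j i, rfl⟩
  rw [Finsupp.tsub_apply, Finsupp.single_eq_same]
  omega

theorem subsingleton_ext_monIdeal_sgnExp_iff {T : ModuleCat.{0} (MvPolynomial (Fin n) K)}
    (hT : ∀ i, X i ∈ Module.annihilator (MvPolynomial (Fin n) K) T) {v : Fin q → Fin n →₀ ℕ}
    (hzero : ∀ i, ∃ j, v j i = 0) (d : ℕ) :
    Subsingleton (Ext T (ModuleCat.of _ (_ ⧸ monIdeal K (sgnExp v))) d) ↔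
      Subsingleton (Ext T (ModuleCat.of _ (_ ⧸ monIdeal K v)) d) := by
  induction v using WellFoundedLT.induction with
  | ind v ih =>
    by_cases hv : sgnExp v = v
    · rw [hv]
    · obtain ⟨i, t, u, ht, huv, rfl⟩ := exists_shiftRow_eq_of_sgnExp_ne hzero hv
      have hzero_u (i' : Fin n) : ∃ j, u j i' = 0 :=
        (hzero i').imp fun j hj => Nat.le_zero.1 ((huv.le j i').trans_eq hj)
      rw [sgnExp_shiftRow, ih u huv hzero_u, subsingleton_ext_monIdeal_shiftRow_iff (hT i) ht]

theorem mIdeal_ne_top (K : Type) [Field K] (n : ℕ) : mIdeal K n ≠ ⊤ := by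
  have hle : mIdeal K n ≤ RingHom.ker (constantCoeff (R := K) (σ := Fin n)) := by
    rw [mIdeal, Ideal.span_le]
    rintro _ ⟨i, rfl⟩
    simp
  exact fun htop => RingHom.ker_ne_top _ (top_le_iff.1 (htop ▸ hle))

theorem monIdeal_le_iff {v : Fin q → Fin n →₀ ℕ} {I : Ideal (MvPolynomial (Fin n) K)} :
    monIdeal K v ≤ I ↔ ∀ j, monomial (v j) (1 : K) ∈ I := by
  rw [monIdeal, Ideal.span_le, Set.range_subset_iff]
  rfl

theorem monomial_mem_monIdeal {v : Fin q → Fin n →₀ ℕ} {a : Fin n →₀ ℕ} {j : Fin q}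
    (h : v j ≤ a) : monomial a (1 : K) ∈ monIdeal K v :=
  Ideal.mem_of_dvd _ (monomial_one_dvd_monomial_one.2 h) (Ideal.subset_span ⟨j, rfl⟩)

theorem monIdeal_eq_top {v : Fin q → Fin n →₀ ℕ} {j : Fin q} (hj : v j = 0) :
    monIdeal K v = ⊤ :=
  (Ideal.eq_top_iff_one _).2 (monomial_mem_monIdeal hj.le)

theorem monIdeal_le_mIdeal {v : Fin q → Fin n →₀ ℕ} (hv : ∀ j, v j ≠ 0) :
    monIdeal K v ≤ mIdeal K n := by
  refine monIdeal_le_iff.2 fun j => ?_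
  obtain ⟨i, hi⟩ := Finsupp.ne_iff.1 (hv j)
  exact Ideal.mem_of_dvd _ (X_dvd_monomial.2 (.inr hi)) (Ideal.subset_span ⟨i, rfl⟩)

theorem monIdeal_le_radical {v w : Fin q → Fin n →₀ ℕ} (h : ∀ j i, v j i = 0 → w j i = 0) :
    monIdeal K v ≤ (monIdeal K w).radical := by
  refine monIdeal_le_iff.2 fun j => ⟨(w j).degree, ?_⟩
  rw [monomial_pow, one_pow]
  refine monomial_mem_monIdeal (j := j) fun i => ?_
  rcases eq_or_ne (v j i) 0 with hi | hi
  · simp [h j i hi]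
  · exact (Finsupp.le_degree i (w j)).trans (Nat.le_mul_of_pos_right _ (Nat.pos_of_ne_zero hi))

theorem exists_entry_eq_zero_of_two_le_heightOf {v : Fin q → Fin n →₀ ℕ}
    (hht : 2 ≤ heightOf (monIdeal K v)) (i : Fin n) : ∃ j, v j i = 0 := by
  by_contra! hpos
  let p : PrimeSpectrum (MvPolynomial (Fin n) K) :=
    ⟨Ideal.span {X i}, (Ideal.span_singleton_prime X_prime.ne_zero).2 X_prime⟩
  have hle : monIdeal K v ≤ p.asIdeal :=
    monIdeal_le_iff.2 fun j => Ideal.mem_span_singleton.2 (X_dvd_monomial.2 (.inr (hpos j)))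
  have hp : Order.height p ≤ 1 := by
    rw [← PrimeSpectrum.height_eq_orderHeight]
    exact Ideal.height_span_singleton_le_one X_prime.not_isUnit
  exact absurd (hht.trans ((iInf₂_le p hle).trans hp)) (by decide)

theorem depthQuot_eq_of_subsingleton_ext_iff {I J : Ideal (MvPolynomial (Fin n) K)}
    (hI : I ≤ mIdeal K n) (hJ : J ≤ mIdeal K n)
    (h : ∀ d : ℕ,
      Subsingleton (Ext (ModuleCat.of (MvPolynomial (Fin n) K) (_ ⧸ mIdeal K n))
        (ModuleCat.of _ (_ ⧸ I)) d) ↔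
      Subsingleton (Ext (ModuleCat.of (MvPolynomial (Fin n) K) (_ ⧸ mIdeal K n))
        (ModuleCat.of _ (_ ⧸ J)) d)) :
    depthQuot K n I = depthQuot K n J := by
  have hm := mIdeal_ne_top K n
  simp only [depthQuot, exists_isRegular_quotient_iff_subsingleton_ext hm hI,
    exists_isRegular_quotient_iff_subsingleton_ext hm hJ, h]

theorem depthQuot_monIdeal_sgnExp {v : Fin q → Fin n →₀ ℕ} (hzero : ∀ i, ∃ j, v j i = 0) :
    depthQuot K n (monIdeal K (sgnExp v)) = depthQuot K n (monIdeal K v) := by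
  have hcol (j : Fin q) : sgnExp v j = 0 ↔ v j = 0 := by
    simp only [Finsupp.ext_iff, Finsupp.zero_apply, sgnExp_eq_zero_iff (hzero _)]
  by_cases hv : ∃ j, v j = 0
  · obtain ⟨j, hj⟩ := hv
    rw [monIdeal_eq_top hj, monIdeal_eq_top ((hcol j).2 hj)]
  · push Not at hv
    refine depthQuot_eq_of_subsingleton_ext_iff (monIdeal_le_mIdeal fun j => (hcol j).not.2 (hv j))
      (monIdeal_le_mIdeal hv) (subsingleton_ext_monIdeal_sgnExp_iff (fun i => ?_) hzero)
    rw [Ideal.annihilator_quotient]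
    exact Ideal.subset_span ⟨i, rfl⟩

theorem ringKrullDim_quotient_monIdeal_sgnExp {v : Fin q → Fin n →₀ ℕ}
    (hzero : ∀ i, ∃ j, v j i = 0) :
    ringKrullDim (MvPolynomial (Fin n) K ⧸ monIdeal K (sgnExp v)) =
      ringKrullDim (MvPolynomial (Fin n) K ⧸ monIdeal K v) :=
  ringKrullDim_quotient_eq_of_radical_eq <| le_antisymm
    (Ideal.radical_le_radical_iff.2 <|
      monIdeal_le_radical fun j i => (sgnExp_eq_zero_iff (hzero i) j).1)
    (Ideal.radical_le_radical_iff.2 <|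
      monIdeal_le_radical fun j i => (sgnExp_eq_zero_iff (hzero i) j).2)

end MonomialIdeal

theorem cm_quot_iff_cm_quot_sgn_general (K : Type) [Field K] (n q : ℕ)
    (v : Fin q → Fin n →₀ ℕ) (hzero : ∀ i, ∃ j, v j i = 0) :
    cmQuot K n (monIdeal K v) ↔ cmQuot K n (monIdeal K (sgnExp v)) := by
  rw [cmQuot, cmQuot, depthQuot_monIdeal_sgnExp hzero, ringKrullDim_quotient_monIdeal_sgnExp hzero]

/-- **Signature invariants of monomial ideals** (Theorem: Cohen–Macaulayness).
Let `I` be a monomial ideal of `R = K[x_1,…,x_n]` of height at least `2`, with minimal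
monomial generating set `G(I) = {x^{v_1},…,x^{v_q}}`.  Then `R/I` is Cohen–Macaulay if
and only if `R/sgn(I)` is Cohen–Macaulay. -/
theorem cm_quot_iff_cm_quot_sgn (K : Type) [Field K] (n q : ℕ)
    (v : Fin q → Fin n →₀ ℕ) (hv : AntichainFam v)
    (I : Ideal (MvPolynomial (Fin n) K)) (hI : I = monIdeal K v)
    (hht : (2 : ℕ∞) ≤ heightOf I) :
    cmQuot K n I ↔ cmQuot K n (monIdeal K (sgnExp v)) := by
  subst hI
  exact cm_quot_iff_cm_quot_sgn_general K n q v (exists_entry_eq_zero_of_two_le_heightOf hht)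
end

section
/- Let I be a monomial ideal of R = K[x_1,…,x_n] of height at least 2. Then the set of associated primes of I equals the set of associated primes of sgn(I), i.e., Ass(I) = Ass(sgn(I)). -/
open MvPolynomial

/-!
Over a domain, an associated prime `P` of a monomial ideal `I` is generated by a set `S` of
variables and has the form `I : x^a`. Evaluating `P = I : x^a` on monomials gives, for each
`i ∈ S`, a generator `v (J i)` with `v (J i) i = a i + 1`, every other `S`-coordinate of which is
at most that of `a`; moreover each generator exceeds `a` in some `S`-coordinate. Eliminating `a`
leaves conditions on `J` that compare entries of the same row only, apart from `0 < v (J i) i`,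
which is such a comparison as soon as row `i` contains a zero. The signature preserves the order
within each row, and every row contains a zero because `I` has height at least two, so that
`I ⊈ (x_i)`.
-/

section MonomialIdeal

variable {σ R : Type*}

section CommSemiring

variable [CommSemiring R] {I J : Ideal (MvPolynomial σ R)}

theorem support_mul_monomial_one (f : MvPolynomial σ R) (a : σ →₀ ℕ) :
    (f * monomial a 1).support = f.support.map (addRightEmbedding a) :=
  AddMonoidAlgebra.support_coeff_mul_single f _ (by simp) _

theorem exists_coeff_add_mul_ne_zero [NoZeroDivisors R] {f g : MvPolynomial σ R}
    (hf : f ≠ 0) (hg : g ≠ 0) :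
    ∃ d ∈ f.support, ∃ e ∈ g.support, (f * g).coeff (d + e) ≠ 0 := by
  obtain ⟨d, hd, e, he, hde⟩ :=
    UniqueSums.uniqueAdd_of_nonempty (support_nonempty.2 hf) (support_nonempty.2 hg)
  refine ⟨d, hd, e, he, ?_⟩
  have hcoeff : (f * g).coeff (d + e) = f.coeff d * g.coeff e :=
    AddMonoidAlgebra.coeff_mul_add_of_uniqueAdd hde
  rw [hcoeff]
  exact mul_ne_zero (mem_support_iff.1 hd) (mem_support_iff.1 he)

theorem monomial_mem_of_monomial_one_mem {m : σ →₀ ℕ} (h : monomial m (1 : R) ∈ I) (c : R) :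
    monomial m c ∈ I := by
  simpa only [C_mul_monomial, mul_one] using I.mul_mem_left (C c) h

/-- Monomial ideals of a polynomial ring, described as the ideals that contain, with each of their
elements, all the monomials occurring in it. -/
def IsMonomialIdeal (I : Ideal (MvPolynomial σ R)) : Prop :=
  ∀ f ∈ I, ∀ m ∈ f.support, monomial m (1 : R) ∈ I

namespace IsMonomialIdeal

theorem mem_iff (hI : IsMonomialIdeal I) {f : MvPolynomial σ R} :
    f ∈ I ↔ ∀ m ∈ f.support, monomial m (1 : R) ∈ I := by
  refine ⟨hI f, fun h => ?_⟩
  rw [f.as_sum]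
  exact I.sum_mem fun m hm => monomial_mem_of_monomial_one_mem (h m hm) _

theorem ext_iff (hI : IsMonomialIdeal I) (hJ : IsMonomialIdeal J) :
    I = J ↔ ∀ m, monomial m (1 : R) ∈ I ↔ monomial m (1 : R) ∈ J := by
  refine ⟨fun h m => h ▸ Iff.rfl, fun h => Ideal.ext fun f => ?_⟩
  rw [hI.mem_iff, hJ.mem_iff]
  simp only [h]

theorem mul_monomial_mem_iff (hI : IsMonomialIdeal I) {f : MvPolynomial σ R} {a : σ →₀ ℕ} :
    f * monomial a 1 ∈ I ↔ ∀ m ∈ f.support, monomial (m + a) (1 : R) ∈ I := by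
  rw [hI.mem_iff, support_mul_monomial_one]
  simp only [Finset.forall_mem_map, addRightEmbedding_apply]

theorem colon_monomial (hI : IsMonomialIdeal I) (a : σ →₀ ℕ) :
    IsMonomialIdeal (I.colon {monomial a (1 : R)}) := by
  intro f hf m hm
  rw [Submodule.mem_colon_singleton, smul_eq_mul] at hf ⊢
  simpa [monomial_mul] using hI.mul_monomial_mem_iff.1 hf m hm

theorem colon_eq_inf (hI : IsMonomialIdeal I) {f : MvPolynomial σ R}
    (hf : IsMonomialIdeal (I.colon {f})) :
    I.colon {f} = f.support.inf fun a => I.colon {monomial a (1 : R)} := by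
  have hinf : IsMonomialIdeal (f.support.inf fun a => I.colon {monomial a (1 : R)}) := by
    intro g hg m hm
    simp only [Submodule.mem_finsetInf] at hg ⊢
    exact fun a ha => hI.colon_monomial a g (hg a ha) m hm
  rw [hf.ext_iff hinf]
  intro b
  simp only [Submodule.mem_finsetInf, Submodule.mem_colon_singleton, smul_eq_mul, monomial_mul,
    one_mul]
  rw [mul_comm, hI.mul_monomial_mem_iff]
  simp only [add_comm b]

theorem eq_span_X_of_isPrime (hI : IsMonomialIdeal I) (hp : I.IsPrime) :
    I = Ideal.span (X '' {i | X i ∈ I}) := by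
  refine le_antisymm (fun f hf => mem_ideal_span_X_image.2 fun m hm => ?_)
    (Ideal.span_le.2 (Set.image_subset_iff.2 fun _ hi => hi))
  have hprod := hI f hf m hm
  rw [monomial_eq, C_1, one_mul, Finsupp.prod, hp.prod_mem_iff] at hprod
  obtain ⟨i, hi, hmem⟩ := hprod
  exact ⟨i, hp.mem_of_pow_mem _ hmem, Finsupp.mem_support_iff.1 hi⟩

end IsMonomialIdeal

theorem isMonomialIdeal_of_mem_iff {p : (σ →₀ ℕ) → Prop}
    (h : ∀ f, f ∈ I ↔ ∀ m ∈ f.support, p m) : IsMonomialIdeal I := by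
  intro f hf m hm
  rw [h] at hf ⊢
  intro k hk
  rw [Finset.mem_singleton.1 (support_monomial_subset hk)]
  exact hf m hm

theorem isMonomialIdeal_span_X (S : Set σ) :
    IsMonomialIdeal (Ideal.span (X '' S : Set (MvPolynomial σ R))) :=
  isMonomialIdeal_of_mem_iff fun _ => mem_ideal_span_X_image

variable {ι : Type*}

variable (R) in
/-- The monomial ideal generated by the monomials with exponent vectors `v j`. It extends `monIdeal`
to arbitrary index types and coefficient rings. -/
noncomputable def monomialSpan (v : ι → σ →₀ ℕ) : Ideal (MvPolynomial σ R) :=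
  Ideal.span (Set.range fun j => monomial (v j) 1)

theorem mem_monomialSpan {v : ι → σ →₀ ℕ} {f : MvPolynomial σ R} :
    f ∈ monomialSpan R v ↔ ∀ m ∈ f.support, ∃ j, v j ≤ m := by
  rw [monomialSpan, Set.range_comp' (fun m => monomial m (1 : R)) v, mem_ideal_span_monomial_image]
  simp only [Set.exists_range_iff]

theorem monomial_mem_monomialSpan [Nontrivial R] {v : ι → σ →₀ ℕ} {m : σ →₀ ℕ} :
    monomial m (1 : R) ∈ monomialSpan R v ↔ ∃ j, v j ≤ m := by
  classical
  simp [mem_monomialSpan, support_monomial]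

theorem isMonomialIdeal_monomialSpan (v : ι → σ →₀ ℕ) :
    IsMonomialIdeal (monomialSpan R v) :=
  isMonomialIdeal_of_mem_iff fun _ => mem_monomialSpan

theorem span_X_eq_colon_iff [Nontrivial R] {v : ι → σ →₀ ℕ} {S : Set σ} {a : σ →₀ ℕ} :
    Ideal.span (X '' S) = (monomialSpan R v).colon {monomial a (1 : R)} ↔
      ∀ b : σ →₀ ℕ, (∃ i ∈ S, b i ≠ 0) ↔ ∃ j, v j ≤ b + a := by
  classical
  rw [(isMonomialIdeal_span_X S).ext_iff ((isMonomialIdeal_monomialSpan v).colon_monomial a)]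
  refine forall_congr' fun b => ?_
  rw [mem_ideal_span_X_image, Submodule.mem_colon_singleton, smul_eq_mul, monomial_mul, one_mul,
    monomial_mem_monomialSpan]
  simp [support_monomial]

end CommSemiring

section CommRing

variable [CommRing R]

theorem support_sub_monomial_coeff [DecidableEq σ] (f : MvPolynomial σ R) (d : σ →₀ ℕ) :
    (f - monomial d (f.coeff d)).support = f.support.erase d := by
  ext m
  obtain rfl | h := eq_or_ne m d
  · simp
  · simp [h, h.symm, coeff_monomial]

theorem isMonomialIdeal_of_exists_monomial_mem {I : Ideal (MvPolynomial σ R)}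
    (h : ∀ f ∈ I, f ≠ 0 → ∃ d ∈ f.support, monomial d (1 : R) ∈ I) : IsMonomialIdeal I := by
  classical
  intro f
  induction hk : f.support.card using Nat.strong_induction_on generalizing f with
  | _ k ih =>
    intro hf m hm
    obtain ⟨d, hd, hdI⟩ := h f hf (support_nonempty.1 ⟨m, hm⟩)
    obtain rfl | hmd := eq_or_ne m d
    · exact hdI
    · refine ih _ ?_ (f - monomial d (f.coeff d)) rfl
        (I.sub_mem hf (monomial_mem_of_monomial_one_mem hdI _)) m ?_
      · rw [support_sub_monomial_coeff, ← hk]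
        exact Finset.card_erase_lt_of_mem hd
      · rw [support_sub_monomial_coeff]
        exact Finset.mem_erase.2 ⟨hmd, hm⟩

theorem colon_mul_sub_eq_of_isPrime {A : Type*} [CommRing A] {I : Ideal A} {f x y : A}
    (hp : (I.colon {f}).IsPrime) (hx : x ∉ I.colon {f}) (hxy : x * y ∈ I) :
    I.colon {(f - y) * x} = I.colon {f} := by
  ext u
  have hu : u ∈ I.colon {f} ↔ u * x ∈ I.colon {f} :=
    ⟨fun h => Ideal.mul_mem_right _ _ h, fun h => (hp.mem_or_mem h).resolve_right hx⟩
  rw [hu, Submodule.mem_colon_singleton, Submodule.mem_colon_singleton, smul_eq_mul, smul_eq_mul,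
    show u * ((f - y) * x) = u * x * f - u * (x * y) by ring]
  exact Submodule.sub_mem_iff_left _ (I.mul_mem_left u hxy)

/-- Some product `x^e x^d` of monomials of `g ∈ I : f` and of `f` does not cancel in `g f`, so it
lies in `I`. If `x^e ∉ I : f`, then removing the term `c x^d` from `f` and multiplying by `x^e`
gives a polynomial with fewer terms and the same colon ideal. -/
theorem IsMonomialIdeal.colon_of_isPrime [NoZeroDivisors R] {I : Ideal (MvPolynomial σ R)}
    (hI : IsMonomialIdeal I) (f : MvPolynomial σ R) (hp : (I.colon {f}).IsPrime) :
    IsMonomialIdeal (I.colon {f}) := by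
  classical
  induction hk : f.support.card using Nat.strong_induction_on generalizing f with
  | _ k ih =>
    refine isMonomialIdeal_of_exists_monomial_mem fun g hg hg0 => ?_
    have hf0 : f ≠ 0 := by
      rintro rfl
      exact hp.ne_top Submodule.colon_singleton_zero
    obtain ⟨e, he, d, hd, hcoeff⟩ := exists_coeff_add_mul_ne_zero hg0 hf0
    have hgf : g * f ∈ I := Submodule.mem_colon_singleton.1 hg
    have hmem : monomial e (1 : R) * monomial d (f.coeff d) ∈ I := by
      rw [monomial_mul]
      exact monomial_mem_of_monomial_one_mem (hI _ hgf _ (mem_support_iff.2 hcoeff)) _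
    refine ⟨e, he, ?_⟩
    by_contra hnot
    have hcolon := colon_mul_sub_eq_of_isPrime hp hnot hmem
    have hcard : ((f - monomial d (f.coeff d)) * monomial e 1).support.card < k := by
      rw [support_mul_monomial_one, Finset.card_map, support_sub_monomial_coeff, ← hk]
      exact Finset.card_erase_lt_of_mem hd
    have hmono := ih _ hcard _ (hcolon ▸ hp) rfl
    rw [hcolon] at hmono
    exact hnot (hmono g hg e he)

theorem IsMonomialIdeal.exists_colon_monomial_eq [NoZeroDivisors R]
    {I : Ideal (MvPolynomial σ R)} (hI : IsMonomialIdeal I) {f : MvPolynomial σ R}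
    (hp : (I.colon {f}).IsPrime) :
    ∃ a, I.colon {f} = I.colon {monomial a (1 : R)} := by
  have hinf := hI.colon_eq_inf (hI.colon_of_isPrime f hp)
  obtain ⟨a, -, ha⟩ := Ideal.eq_inf_of_isPrime_inf (hinf ▸ hp)
  exact ⟨a, hinf.trans ha.symm⟩

end CommRing

end MonomialIdeal

section CornerSystem

variable {σ ι : Type*} {S : Set σ}

/-- A corner system for a set `S` of variables assigns to each `i ∈ S` a generator `v (J i)` so that
the point `a` with `S`-coordinates `a i = v (J i) i - 1` lies (once its other coordinates are large)
outside the monomial ideal with exponents `v j`, but enters it after a step in any direction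
`i ∈ S`. The conditions are phrased without `a`. -/
structure IsCornerSystem (v : ι → σ →₀ ℕ) (J : S → ι) : Prop where
  pos : ∀ i, 0 < v (J i) i
  lt : ∀ i k : S, i ≠ k → v (J i) k < v (J k) k
  exists_le : ∀ j, ∃ i, v (J i) i ≤ v j i

theorem IsCornerSystem.of_lt_iff_lt {v w : ι → σ →₀ ℕ} {J : S → ι} (hJ : IsCornerSystem v J)
    (hlt : ∀ i j k, v j i < v k i ↔ w j i < w k i) (hzero : ∀ i, ∃ j, v j i = 0) :
    IsCornerSystem w J where
  pos i := by
    obtain ⟨j, hj⟩ := hzero i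
    exact Nat.zero_lt_of_lt ((hlt i j (J i)).1 (hj ▸ hJ.pos i))
  lt i k hik := (hlt k _ _).1 (hJ.lt i k hik)
  exists_le j := (hJ.exists_le j).imp fun i hi => not_lt.1 fun h => hi.not_gt ((hlt i _ _).2 h)

theorem exists_isCornerSystem {v : ι → σ →₀ ℕ} {a : σ →₀ ℕ}
    (ha : ∀ b : σ →₀ ℕ, (∃ i ∈ S, b i ≠ 0) ↔ ∃ j, v j ≤ b + a) :
    ∃ J : S → ι, IsCornerSystem v J := by
  classical
  have exceeds : ∀ j, ∃ i : S, a i < v j i := by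
    intro j
    obtain ⟨i, hi, hne⟩ := (ha (v j - a)).2 ⟨j, le_tsub_add⟩
    exact ⟨⟨i, hi⟩, Nat.lt_of_sub_ne_zero hne⟩
  have step : ∀ i : S, ∃ j, v j ≤ Finsupp.single (i : σ) 1 + a :=
    fun i => (ha _).1 ⟨i, i.2, by simp⟩
  choose J hJ using step
  have off_le : ∀ i k : S, i ≠ k → v (J i) k ≤ a k := by
    intro i k hik
    simpa [Finsupp.single_apply, Subtype.coe_inj, hik] using hJ i k
  have diag : ∀ i : S, v (J i) i = a i + 1 := by
    intro i
    obtain ⟨k, hk⟩ := exceeds (J i)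
    obtain rfl : i = k := by_contra fun hik => (off_le i k hik).not_gt hk
    have hle : v (J i) i ≤ 1 + a i := by simpa using hJ i i
    omega
  refine ⟨J, fun i => ?_, fun i k hik => ?_, fun j => ?_⟩
  · rw [diag]
    exact Nat.succ_pos _
  · rw [diag]
    exact Nat.lt_succ_of_le (off_le i k hik)
  · exact (exceeds j).imp fun i hi => (diag i).trans_le hi

theorem IsCornerSystem.exists_corner [Finite σ] {v : ι → σ →₀ ℕ} {J : S → ι}
    (hJ : IsCornerSystem v J) :
    ∃ a : σ →₀ ℕ, ∀ b : σ →₀ ℕ, (∃ i ∈ S, b i ≠ 0) ↔ ∃ j, v j ≤ b + a := by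
  classical
  have := Fintype.ofFinite S
  let a : σ →₀ ℕ := Finsupp.equivFunOnFinite.symm fun k =>
    if hk : k ∈ S then v (J ⟨k, hk⟩) k - 1 else ∑ i, v (J i) k
  have a_mem : ∀ k : S, a k = v (J k) k - 1 := fun k => by simp [a]
  have a_notMem : ∀ k ∉ S, a k = ∑ i, v (J i) k := fun k hk => by simp [a, hk]
  refine ⟨a, fun b => ⟨?_, ?_⟩⟩
  · rintro ⟨i, hi, hbi⟩
    refine ⟨J ⟨i, hi⟩, fun k => ?_⟩
    rw [Finsupp.add_apply]
    by_cases hk : k ∈ S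
    · have hak := a_mem ⟨k, hk⟩
      obtain rfl | hik := eq_or_ne i k
      · lia
      · have hlt := hJ.lt ⟨i, hi⟩ ⟨k, hk⟩ (by simpa using hik)
        lia
    · rw [a_notMem k hk]
      exact le_add_left (Finset.single_le_sum (f := fun i => v (J i) k)
        (fun _ _ => Nat.zero_le _) (Finset.mem_univ _))
  · rintro ⟨j, hj⟩
    obtain ⟨i, hi⟩ := hJ.exists_le j
    have hji : v j i ≤ b i + a i := hj i
    have hpos := hJ.pos i
    have hai := a_mem i
    exact ⟨i, i.2, by lia⟩

end CornerSystem

section AssociatedPrimes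

theorem mem_associatedPrimes_quotient_iff {A : Type*} [CommRing A] [IsNoetherianRing A]
    {I P : Ideal A} :
    P ∈ associatedPrimes A (A ⧸ I) ↔ P.IsPrime ∧ ∃ f, P = I.colon {f} := by
  rw [AssociatedPrimes.mem_iff, isAssociatedPrime_iff, Ideal.Quotient.mk_surjective.exists]
  have hcolon (f : A) : (⊥ : Submodule A (A ⧸ I)).colon {Ideal.Quotient.mk I f} = I.colon {f} := by
    ext g
    rw [Submodule.mem_colon_singleton, Submodule.mem_colon_singleton, Submodule.mem_bot,
      smul_eq_mul, ← Ideal.Quotient.eq_zero_iff_mem, map_mul, Algebra.smul_def,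
      Ideal.Quotient.algebraMap_eq]
  simp only [hcolon]

variable {σ ι R : Type*} [Finite σ] [CommRing R] [IsNoetherianRing R]

theorem mem_associatedPrimes_quot_monomialSpan_iff [IsDomain R] {v : ι → σ →₀ ℕ}
    {P : Ideal (MvPolynomial σ R)} :
    P ∈ associatedPrimes (MvPolynomial σ R) (MvPolynomial σ R ⧸ monomialSpan R v) ↔
      P.IsPrime ∧ ∃ S : Set σ, P = Ideal.span (X '' S) ∧ ∃ J : S → ι, IsCornerSystem v J := by
  have hI := isMonomialIdeal_monomialSpan (R := R) v
  rw [mem_associatedPrimes_quotient_iff]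
  refine and_congr_right fun hP => ⟨?_, ?_⟩
  · rintro ⟨f, rfl⟩
    obtain ⟨a, ha⟩ := hI.exists_colon_monomial_eq hP
    have hspan := (hI.colon_of_isPrime f hP).eq_span_X_of_isPrime hP
    exact ⟨_, hspan, exists_isCornerSystem (span_X_eq_colon_iff.1 (hspan.symm.trans ha))⟩
  · rintro ⟨S, rfl, J, hJ⟩
    obtain ⟨a, ha⟩ := hJ.exists_corner
    exact ⟨monomial a 1, span_X_eq_colon_iff.2 ha⟩

theorem associatedPrimes_quot_monomialSpan_congr [IsDomain R] {v w : ι → σ →₀ ℕ}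
    (hlt : ∀ i j k, v j i < v k i ↔ w j i < w k i)
    (hv : ∀ i, ∃ j, v j i = 0) (hw : ∀ i, ∃ j, w j i = 0) :
    associatedPrimes (MvPolynomial σ R) (MvPolynomial σ R ⧸ monomialSpan R v) =
      associatedPrimes (MvPolynomial σ R) (MvPolynomial σ R ⧸ monomialSpan R w) := by
  have hcorner (S : Set σ) (J : S → ι) : IsCornerSystem v J ↔ IsCornerSystem w J :=
    ⟨fun h => h.of_lt_iff_lt hlt hv, fun h => h.of_lt_iff_lt (fun i j k => (hlt i j k).symm) hw⟩
  ext P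
  simp only [mem_associatedPrimes_quot_monomialSpan_iff, hcorner]

theorem heightOf_eq_height {A : Type*} [CommRing A] (I : Ideal A) : heightOf I = I.height := by
  refine le_antisymm ?_ (le_iInf₂ fun p hp => ?_)
  · rw [Ideal.height_eq_inf_minimalPrimes]
    refine le_iInf₂ fun p hp => ?_
    let p' : PrimeSpectrum A := ⟨p, hp.isPrime⟩
    have hIp : I ≤ p'.asIdeal := hp.le
    exact (iInf₂_le p' hIp).trans_eq p'.height_eq_orderHeight.symm
  · exact (Ideal.height_mono hp).trans_eq p.height_eq_orderHeight

theorem exists_apply_eq_zero_of_one_lt_height [Nontrivial R] {v : ι → σ →₀ ℕ}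
    (hht : 1 < (monomialSpan R v).height) (i : σ) : ∃ j, v j i = 0 := by
  by_contra! hne
  have hle : monomialSpan R v ≤ Ideal.span {X i} := by
    refine Ideal.span_le.2 (Set.range_subset_iff.2 fun j => ?_)
    rw [SetLike.mem_coe, Ideal.mem_span_singleton, X_dvd_monomial]
    exact Or.inr (hne j)
  have hX : ¬IsUnit (X i : MvPolynomial σ R) := fun h => by simpa using h.map constantCoeff
  exact hht.not_ge ((Ideal.height_mono hle).trans (Ideal.height_span_singleton_le_one hX))

end AssociatedPrimes

section Signature

theorem strictMonoOn_card_filter_lt {α : Type*} [LinearOrder α] (s : Finset α) :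
    StrictMonoOn (fun m => (s.filter (· < m)).card) s := by
  intro x hx y _ hxy
  refine Finset.card_lt_card (Finset.ssubset_iff_subset_ne.2 ⟨?_, fun h => ?_⟩)
  · exact Finset.monotone_filter_right s fun m _ hm => hm.trans hxy
  · have hmem : x ∈ s.filter (· < x) := h ▸ Finset.mem_filter.2 ⟨hx, hxy⟩
    exact lt_irrefl x (Finset.mem_filter.1 hmem).2

variable {n q : ℕ} (v : Fin q → Fin n →₀ ℕ)

theorem sgnExp_lt_sgnExp_iff (i : Fin n) (j k : Fin q) :
    sgnExp v j i < sgnExp v k i ↔ v j i < v k i :=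
  (strictMonoOn_card_filter_lt (Finset.univ.image fun l => v l i)).lt_iff_lt (by simp) (by simp)

theorem sgnExp_eq_zero {v : Fin q → Fin n →₀ ℕ} {i : Fin n} {j : Fin q} (h : v j i = 0) :
    sgnExp v j i = 0 := by
  simp [sgnExp, h]

theorem ass_quot_eq_ass_quot_sgn_general {R : Type*} [CommRing R] [IsDomain R]
    [IsNoetherianRing R] (hht : 2 ≤ heightOf (monomialSpan R v)) :
    associatedPrimes (MvPolynomial (Fin n) R)
        (MvPolynomial (Fin n) R ⧸ monomialSpan R v) =
      associatedPrimes (MvPolynomial (Fin n) R)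
        (MvPolynomial (Fin n) R ⧸ monomialSpan R (sgnExp v)) := by
  rw [heightOf_eq_height] at hht
  have hone : 1 < (monomialSpan R v).height := lt_of_lt_of_le (by norm_num) hht
  have hzero := exists_apply_eq_zero_of_one_lt_height hone
  exact associatedPrimes_quot_monomialSpan_congr
    (fun i j k => (sgnExp_lt_sgnExp_iff v i j k).symm) hzero
    fun i => (hzero i).imp fun _ => sgnExp_eq_zero

end Signature

/-- **Signature invariants of monomial ideals** (Theorem: associated primes).
Let `I` be a monomial ideal of `R = K[x_1,…,x_n]` of height at least `2`, with minimal
monomial generating set `G(I) = {x^{v_1},…,x^{v_q}}`.  Then `Ass(I) = Ass(sgn(I))`,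
where `Ass(I)` is the set of associated primes of the `R`-module `R/I`. -/
theorem ass_quot_eq_ass_quot_sgn (K : Type) [Field K] (n q : ℕ)
    (v : Fin q → Fin n →₀ ℕ) (hv : AntichainFam v)
    (I : Ideal (MvPolynomial (Fin n) K)) (hI : I = monIdeal K v)
    (hht : (2 : ℕ∞) ≤ heightOf I) :
    associatedPrimes (MvPolynomial (Fin n) K) (MvPolynomial (Fin n) K ⧸ I) =
      associatedPrimes (MvPolynomial (Fin n) K)
        (MvPolynomial (Fin n) K ⧸ monIdeal K (sgnExp v)) := by
  subst hI
  exact ass_quot_eq_ass_quot_sgn_general v hht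
end
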